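/- arXiv:1309.5842 — 3 statements merged into one kernel-verified Lean document; each statement's English description precedes it below -/
import Mathlib

section
/- Let A_j, B_j ∈ M_n(ℂ) for j = 1, …, m, with {A_1, …, A_m} linearly independent and {B_1, …, B_m} linearly independent. Assume Σ_{j=1}^m A_j X B_j = Σ_{j=1}^m A_j* X B_j* for all X ∈ M_n(ℂ). Then there exist constants c_{k,j} ∈ ℂ such that A_k* = Σ_{j=1}^m conj(c_{k,j}) A_j and B_k* = Σ_{j=1}^m c_{j,k} B_j for every k = 1, …, m. -/
open Matrix

/-!
An operator `X ↦ ∑ⱼ Aⱼ X Bⱼ` determines the tensor `∑ⱼ Aⱼ ⊗ Bⱼ`, so the hypothesis says that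
`∑ⱼ Aⱼ ⊗ Bⱼ = ∑ⱼ Aⱼ* ⊗ Bⱼ*`. Contracting the right-hand factor against functionals dual to the `Bₖ*`
expresses each `Aₖ*` through the `Aⱼ`, contracting the left-hand factor against functionals dual to
the `Aⱼ` expresses each `Bⱼ` through the `Bₖ*`, and the two coefficient matrices coincide.
-/

open scoped TensorProduct

theorem exists_linearMap_apply_eq_single_of_linearIndependent {ι K V : Type*} [DivisionRing K]
    [AddCommGroup V] [Module K V] {v : ι → V} (hv : LinearIndependent K v) :
    ∃ f : V →ₗ[K] ι →₀ K, ∀ i, f (v i) = Finsupp.single i 1 := by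
  obtain ⟨f, hf⟩ := (Finsupp.linearCombination K v).exists_leftInverse_of_injective
    (LinearMap.ker_eq_bot.mpr hv)
  exact ⟨f, fun i ↦ by simpa using LinearMap.congr_fun hf (Finsupp.single i 1)⟩

theorem exists_coeff_of_sum_tmul_eq_sum_tmul {ι κ K V W : Type*} [Fintype ι] [Fintype κ]
    [Field K] [AddCommGroup V] [Module K V] [AddCommGroup W] [Module K W]
    {v : ι → V} {w : ι → W} {v' : κ → V} {w' : κ → W}
    (hv : LinearIndependent K v) (hw' : LinearIndependent K w')
    (h : ∑ i, v i ⊗ₜ[K] w i = ∑ k, v' k ⊗ₜ[K] w' k) :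
    ∃ a : κ → ι → K, (∀ k, v' k = ∑ i, a k i • v i) ∧ ∀ i, w i = ∑ k, a k i • w' k := by
  classical
  obtain ⟨f, hf⟩ := exists_linearMap_apply_eq_single_of_linearIndependent hv
  obtain ⟨g, hg⟩ := exists_linearMap_apply_eq_single_of_linearIndependent hw'
  have hv' (k : κ) : v' k = ∑ i, g (w i) k • v i := by
    simpa [hg, Finsupp.single_apply] using
      congrArg (TensorProduct.rid K V ∘ LinearMap.lTensor V (Finsupp.lapply k ∘ₗ g)) h.symm
  have hw (i : ι) : w i = ∑ k, f (v' k) i • w' k := by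
    simpa [hf, Finsupp.single_apply] using
      congrArg (TensorProduct.lid K W ∘ LinearMap.rTensor W (Finsupp.lapply i ∘ₗ f)) h
  have hfg (k : κ) (i : ι) : f (v' k) i = g (w i) k := by
    simp [hv' k, hf, Finsupp.single_apply]
  exact ⟨fun k i ↦ g (w i) k, hv', fun i ↦ by simpa only [hfg] using hw i⟩

section MatrixOperators

variable {ι κ l m n p R : Type*}

theorem mul_single_mul_apply [NonUnitalNonAssocSemiring R] [Fintype m] [Fintype n]
    [DecidableEq m] [DecidableEq n] (A : Matrix l m R) (B : Matrix n p R)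
    (i : l) (j : m) (r : n) (s : p) (c : R) :
    (A * single j r c * B) i s = A i j * c * B r s := by
  rw [Matrix.mul_apply, Finset.sum_eq_single r, mul_single_apply_same]
  · intro r' _ hr'
    rw [mul_single_apply_of_ne (hbj := hr'), zero_mul]
  · simp

theorem sum_tmul_eq_sum_tmul_of_forall_sum_mul_mul_eq [CommSemiring R] [Fintype ι] [Fintype κ]
    [Finite l] [Fintype m] [Fintype n] [Finite p]
    {A : ι → Matrix l m R} {B : ι → Matrix n p R} {A' : κ → Matrix l m R} {B' : κ → Matrix n p R}
    (h : ∀ X : Matrix m n R, ∑ i, A i * X * B i = ∑ k, A' k * X * B' k) :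
    ∑ i, A i ⊗ₜ[R] B i = ∑ k, A' k ⊗ₜ[R] B' k := by
  classical
  have := Fintype.ofFinite l
  have := Fintype.ofFinite p
  refine ((stdBasis R l m).tensorProduct (stdBasis R n p)).ext_elem ?_
  rintro ⟨⟨i, j⟩, ⟨r, s⟩⟩
  have hentry := congrFun₂ (h (single j r 1)) i s
  simp only [Matrix.sum_apply, mul_single_mul_apply, mul_one] at hentry
  simpa [stdBasis, mul_comm] using hentry

end MatrixOperators

theorem linearIndependent_conjTranspose {ι m n R : Type*} [CommSemiring R] [StarRing R]
    {A : ι → Matrix m n R} (hA : LinearIndependent R A) :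
    LinearIndependent R fun i ↦ (A i)ᴴ :=
  hA.map_of_surjective_injectiveₛ star (conjTransposeAddEquiv m n R).toAddMonoidHom
    star_involutive.surjective (conjTransposeAddEquiv m n R).injective conjTranspose_smul

theorem adjoints_in_span_general {ι n p K : Type*} [Fintype ι] [Fintype n] [Fintype p]
    [Field K] [StarRing K] {A : ι → Matrix n n K} {B : ι → Matrix p p K}
    (hA : LinearIndependent K A) (hB : LinearIndependent K B)
    (h : ∀ X : Matrix n p K, ∑ j, A j * X * B j = ∑ j, (A j)ᴴ * X * (B j)ᴴ) :
    ∃ c : ι → ι → K,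
      (∀ k, (A k)ᴴ = ∑ j, starRingEnd K (c k j) • A j) ∧
      (∀ k, (B k)ᴴ = ∑ j, c j k • B j) := by
  obtain ⟨a, hAa, hBa⟩ := exists_coeff_of_sum_tmul_eq_sum_tmul hA
    (linearIndependent_conjTranspose hB) (sum_tmul_eq_sum_tmul_of_forall_sum_mul_mul_eq h)
  refine ⟨fun k j ↦ starRingEnd K (a k j), fun k ↦ ?_, fun k ↦ ?_⟩
  · simpa only [starRingEnd_self_apply] using hAa k
  · simpa only [conjTranspose_sum, conjTranspose_smul, conjTranspose_conjTranspose,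
      starRingEnd_apply]
      using congrArg conjTranspose (hBa k)

/-- If `{A₁,…,Aₘ}` and `{B₁,…,Bₘ}` are linearly independent in `Mₙ(ℂ)` and
`∑ⱼ Aⱼ X Bⱼ = ∑ⱼ Aⱼ* X Bⱼ*` for all `X`, then there are constants `c_{k,j}` with
`A_k* = ∑ⱼ conj(c_{k,j}) Aⱼ` and `B_k* = ∑ⱼ c_{j,k} Bⱼ` for every `k`. -/
theorem adjoints_in_span {n m : ℕ}
    (A B : Fin m → Matrix (Fin n) (Fin n) ℂ)
    (hA : LinearIndependent ℂ A) (hB : LinearIndependent ℂ B)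
    (h : ∀ X : Matrix (Fin n) (Fin n) ℂ,
      ∑ j, A j * X * B j = ∑ j, (A j)ᴴ * X * (B j)ᴴ) :
    ∃ c : Fin m → Fin m → ℂ,
      (∀ k, (A k)ᴴ = ∑ j, starRingEnd ℂ (c k j) • A j) ∧
      (∀ k, (B k)ᴴ = ∑ j, c j k • B j) :=
  adjoints_in_span_general hA hB h
end

section
/- Let m ≥ 2 and let 𝒜 : M_n(ℂ) → M_n(ℂ) be given by 𝒜(X) = Σ_{i=1}^m A_i X B_i with all A_i, B_i Hermitian. If ⟨𝒜(X), X⟩ > 0 for all nonzero X ∈ M_n(ℂ) (Frobenius inner product), then there exist positive matrices B_i' for i = 1, …, m, a positive matrix A_1', and Hermitian matrices A_i' for i = 2, …, m, such that 𝒜(X) = Σ_{i=1}^m A_i' X B_i' for all X ∈ M_n(ℂ). -/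
open Matrix ComplexOrder

/-!
Let `C` and `D` be the cones of coefficient vectors `v ∈ ℝ^m` for which `∑ vᵢ Bᵢ`, respectively
`∑ vᵢ Aᵢ`, is positive definite. Replacing the `Bᵢ` by their combinations along a basis of `ℝ^m`
replaces the `Aᵢ` by their combinations along the dual basis, so one needs a basis in `C` one of
whose coordinate functionals is given by a vector of `D`. Testing `𝒜` on the matrices `x y*` shows
that every vector `(x* Aᵢ x)ᵢ` lies in `C` and every vector `(y* Bᵢ y)ᵢ` lies in `D`.

It suffices to find orthogonal vectors `c ∈ C` and `d ∈ D`: as `C` is open, `C ∩ dᗮ` then spans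
`dᗮ`, and any `(x* Aᵢ x)ᵢ`, rescaled, completes a basis. Since `m ≥ 2`, the cone `C` has a nonzero
boundary vector `u`, and `⟪u, w⟫ ≤ 0` for some `w = (y* Bᵢ y)ᵢ`. For small `ε > 0` the vector
`d = w - ε u` remains in `D` and has negative inner product with `u`, hence with some vector of `C`.
Its inner product with `(x* Aᵢ x)ᵢ ∈ C` is positive, so it is orthogonal to some vector of the
convex set `C`.
-/

open Module Set Filter Topology
open scoped RealInnerProductSpace

theorem le_span_inter_of_isOpen {𝕜 E : Type*} [NontriviallyNormedField 𝕜] [AddCommGroup E]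
    [Module 𝕜 E] [TopologicalSpace E] [ContinuousAdd E] [ContinuousSMul 𝕜 E] {U : Set E}
    (hU : IsOpen U) {W : Submodule 𝕜 E} (hUW : (U ∩ W).Nonempty) :
    W ≤ Submodule.span 𝕜 (U ∩ W) := by
  obtain ⟨c, hcU, hcW⟩ := hUW
  intro w hw
  have hline : Tendsto (fun t : 𝕜 => c + t • w) (𝓝[≠] 0) (𝓝 c) :=
    tendsto_nhdsWithin_of_tendsto_nhds <| by
      simpa using (by fun_prop : Continuous fun t : 𝕜 => c + t • w).tendsto 0
  obtain ⟨t, htU, ht⟩ :=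
    ((hline.eventually (hU.mem_nhds hcU)).and self_mem_nhdsWithin).exists
  have hmem : c + t • w ∈ U ∩ W := ⟨htU, W.add_mem hcW (W.smul_mem t hw)⟩
  have hw_eq : w = t⁻¹ • ((c + t • w) - c) := by
    rw [add_sub_cancel_left, inv_smul_smul₀ ht]
  rw [hw_eq]
  exact Submodule.smul_mem _ _ <|
    Submodule.sub_mem _ (Submodule.subset_span hmem) (Submodule.subset_span ⟨hcU, hcW⟩)

theorem exists_basis_coord_eq {F V ι : Type*} [Field F] [AddCommGroup V] [Module F V]
    (e : Basis ι F V) (k : ι) {φ : Dual F V} {v : V} (hv : φ v = 1) {s : Set V}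
    (hs : ∀ w ∈ s, φ w = 0) (hker : LinearMap.ker φ ≤ Submodule.span F s) :
    ∃ b : Basis ι F V, b.coord k = φ ∧ ∀ i, b i ∈ insert v s := by
  classical
  have hv₀ : v ≠ 0 := by rintro rfl; simp at hv
  have hspan : ⊤ ≤ Submodule.span F (insert v s) := fun w _ => by
    have hw : w - φ w • v ∈ LinearMap.ker φ := by simp [hv]
    rw [← sub_add_cancel w (φ w • v)]
    exact Submodule.add_mem _ (Submodule.span_mono (subset_insert v s) (hker hw))
      (Submodule.smul_mem _ _ (Submodule.subset_span (mem_insert v s)))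
  have hli : LinearIndepOn F id {v} := LinearIndepOn.singleton hv₀
  have hsub : {v} ⊆ insert v s := singleton_subset_iff.2 (mem_insert v s)
  obtain ⟨i₀, hi₀⟩ : v ∈ range (Basis.extendLe hli hsub hspan) :=
    Basis.subset_extendLe hli hsub hspan rfl
  let t := Basis.extendLe hli hsub hspan
  let σ := t.indexEquiv e
  let b : Basis ι F V := t.reindex (σ.trans (Equiv.swap (σ i₀) k))
  have hbk : b k = v := by simpa [b, t] using hi₀
  have hb : ∀ i, b i ∈ insert v s := fun i =>
    Basis.extendLe_subset hli hsub hspan (by simp [b, t])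
  refine ⟨b, b.ext fun i => ?_, hb⟩
  rcases eq_or_ne i k with rfl | hik
  · rw [Basis.coord_apply, Basis.repr_self, Finsupp.single_eq_same, hbk, hv]
  · have his : b i ∈ s := (hb i).resolve_left fun h => hik (b.injective (h.trans hbk.symm))
    simp [hs _ his, hik]

theorem vecMulVec_ne_zero_of_ne_zero {m n R : Type*} [MulZeroClass R] [NoZeroDivisors R]
    {x : m → R} {y : n → R} (hx : x ≠ 0) (hy : y ≠ 0) : vecMulVec x y ≠ 0 := fun h => by
  obtain ⟨i, hi⟩ := Function.ne_iff.1 hx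
  obtain ⟨j, hj⟩ := Function.ne_iff.1 hy
  exact mul_ne_zero hi hj (congrFun₂ h i j)

theorem isHermitian_sum_smul {ι n R S : Type*} [Fintype ι] [AddCommMonoid R] [StarAddMonoid R]
    [Star S] [TrivialStar S] [SMul S R] [StarModule S R] {A : ι → Matrix n n R}
    (hA : ∀ i, (A i).IsHermitian) (c : ι → S) : (∑ i, c i • A i).IsHermitian :=
  isSelfAdjoint_sum _ fun i _ => (IsSelfAdjoint.all (c i)).smul (hA i)

theorem sum_map₂_sum_smul_eq {R M N P ι κ : Type*} [CommSemiring R] [AddCommMonoid M]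
    [AddCommMonoid N] [AddCommMonoid P] [Module R M] [Module R N] [Module R P]
    [Fintype ι] [Fintype κ] [DecidableEq κ] {S : Matrix κ ι R} {T : Matrix ι κ R} (hST : S * T = 1)
    (f : M →ₗ[R] N →ₗ[R] P) (x : κ → M) (y : κ → N) :
    ∑ i, f (∑ j, T i j • x j) (∑ l, S l i • y l) = ∑ j, f (x j) (y j) := by
  calc ∑ i, f (∑ j, T i j • x j) (∑ l, S l i • y l)
      = ∑ i, ∑ j, ∑ l, (S l i * T i j) • f (x j) (y l) := by
        simp only [map_sum, map_smul, LinearMap.sum_apply, LinearMap.smul_apply, Finset.smul_sum,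
          smul_smul]
        exact Finset.sum_congr rfl fun i _ => Finset.sum_comm
    _ = ∑ j, ∑ l, (S * T) l j • f (x j) (y l) := by
        rw [Finset.sum_comm]
        simp only [Matrix.mul_apply, Finset.sum_smul]
        exact Finset.sum_congr rfl fun j _ => Finset.sum_comm
    _ = ∑ j, f (x j) (y j) := by simp [hST, Matrix.one_apply]

section StrictDual

variable {E : Type*} [NormedAddCommGroup E] [InnerProductSpace ℝ E] {K L : Set E}

/-- The strict dual cone of a set `L`: the vectors having positive inner product with every element
of `L`. Unlike the dual cone `ProperCone.innerDual`, it is open for compact `L`. -/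
def strictDual (L : Set E) : Set E := {v | ∀ w ∈ L, 0 < ⟪v, w⟫}

theorem subset_strictDual_comm : K ⊆ strictDual L ↔ L ⊆ strictDual K := by
  constructor <;> intro h v hv w hw <;> rw [real_inner_comm] <;> exact h hw v hv

theorem isOpen_strictDual (hL : IsCompact L) : IsOpen (strictDual L) :=
  isOpen_iff_mem_nhds.2 fun _ hv => hL.eventually_forall_of_forall_eventually fun w hw =>
    continuous_inner.continuousAt.eventually (lt_mem_nhds (hv w hw))

theorem convex_strictDual (L : Set E) : Convex ℝ (strictDual L) := by
  intro v hv w hw a b ha hb hab z hz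
  have hcomb := (convex_Ioi (0 : ℝ)) (hv z hz) (hw z hz) ha hb hab
  simpa [inner_add_left, real_inner_smul_left] using hcomb

theorem smul_mem_strictDual {v : E} (hv : v ∈ strictDual L) {r : ℝ} (hr : 0 < r) :
    r • v ∈ strictDual L := fun w hw => by
  rw [real_inner_smul_left]
  exact mul_pos hr (hv w hw)

theorem neg_notMem_strictDual {v : E} (hL : L.Nonempty) (hv : v ∈ strictDual L) :
    -v ∉ strictDual L := fun hneg => by
  obtain ⟨w, hw⟩ := hL
  have hpos := hneg w hw
  rw [inner_neg_left] at hpos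
  linarith [hv w hw]

theorem zero_notMem_strictDual (hL : L.Nonempty) : (0 : E) ∉ strictDual L := fun h =>
  neg_notMem_strictDual hL h (by simpa using h)

theorem exists_ne_zero_mem_closure_strictDual_diff (hE : 1 < Module.rank ℝ E) (hL : IsCompact L)
    (hL₀ : L.Nonempty) (hne : (strictDual L).Nonempty) :
    ∃ u ∈ closure (strictDual L) \ strictDual L, u ≠ 0 := by
  by_contra! hzero
  obtain ⟨v, hv⟩ := hne
  have hv₀ : v ≠ 0 := by
    rintro rfl
    exact zero_notMem_strictDual hL₀ hv
  have hclosed : closure (strictDual L) ∩ {0}ᶜ ⊆ strictDual L := fun u hu => by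
    by_contra hmem
    exact hu.2 (hzero u ⟨hu.1, hmem⟩)
  have hall : {0}ᶜ ⊆ strictDual L :=
    (isConnected_compl_singleton_of_one_lt_rank hE 0).isPreconnected.subset_of_closure_inter_subset
      (isOpen_strictDual hL) ⟨v, hv₀, hv⟩ hclosed
  exact neg_notMem_strictDual hL₀ hv (hall (neg_ne_zero.2 hv₀))

theorem exists_mem_strictDual_inner_neg (hE : 1 < Module.rank ℝ E) (hK : IsCompact K)
    (hL : IsCompact L) (hK₀ : K.Nonempty) (hL₀ : L.Nonempty) (hKL : K ⊆ strictDual L) :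
    ∃ c ∈ strictDual L, ∃ d ∈ strictDual K, ⟪d, c⟫ < 0 := by
  obtain ⟨u, ⟨hu, hu'⟩, hu₀⟩ :=
    exists_ne_zero_mem_closure_strictDual_diff hE hL hL₀ (hK₀.mono hKL)
  obtain ⟨w, hwL, hw⟩ : ∃ w ∈ L, ⟪u, w⟫ ≤ 0 := by simpa [strictDual] using hu'
  have hstep : Tendsto (fun ε : ℝ => w - ε • u) (𝓝[>] 0) (𝓝 w) :=
    tendsto_nhdsWithin_of_tendsto_nhds <| by
      simpa using (by fun_prop : Continuous fun ε : ℝ => w - ε • u).tendsto 0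
  have hwK : strictDual K ∈ 𝓝 w :=
    (isOpen_strictDual hK).mem_nhds (subset_strictDual_comm.1 hKL hwL)
  obtain ⟨ε, hεK, hε⟩ := ((hstep.eventually hwK).and self_mem_nhdsWithin).exists
  have hneg : ⟪w - ε • u, u⟫ < 0 := by
    rw [inner_sub_left, real_inner_smul_left, real_inner_comm]
    linarith [mul_pos hε (real_inner_self_pos.2 hu₀)]
  have hopen : IsOpen {v : E | ⟪w - ε • u, v⟫ < 0} := isOpen_lt (by fun_prop) continuous_const
  obtain ⟨c, hc, hcL⟩ := mem_closure_iff.1 hu _ hopen hneg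
  exact ⟨c, hcL, _, hεK, hc⟩

theorem exists_mem_strictDual_inner_eq_zero (hE : 1 < Module.rank ℝ E) (hK : IsCompact K)
    (hL : IsCompact L) (hK₀ : K.Nonempty) (hL₀ : L.Nonempty) (hKL : K ⊆ strictDual L) :
    ∃ c ∈ strictDual L, ∃ d ∈ strictDual K, ⟪d, c⟫ = 0 := by
  obtain ⟨c, hc, d, hd, hdc⟩ := exists_mem_strictDual_inner_neg hE hK hL hK₀ hL₀ hKL
  obtain ⟨x, hx⟩ := hK₀
  have hcont : ContinuousOn (fun v => ⟪d, v⟫) (strictDual L) := by fun_prop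
  obtain ⟨c', hc', hzero⟩ := (convex_strictDual L).isPreconnected.intermediate_value hc (hKL hx)
    hcont ⟨hdc.le, (hd x hx).le⟩
  exact ⟨c', hc', d, hd, hzero⟩

theorem exists_basis_mem_strictDual {ι : Type*} [Nontrivial ι] (e : Basis ι ℝ E) (k : ι)
    (hK : IsCompact K) (hL : IsCompact L) (hK₀ : K.Nonempty) (hL₀ : L.Nonempty)
    (hKL : K ⊆ strictDual L) :
    ∃ b : Basis ι ℝ E, (∀ i, b i ∈ strictDual L) ∧
      ∃ d ∈ strictDual K, ∀ v, b.coord k v = ⟪d, v⟫ := by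
  have hE : 1 < Module.rank ℝ E := by
    rw [← Cardinal.one_lt_lift_iff, ← e.mk_eq_rank, Cardinal.one_lt_lift_iff]
    exact Cardinal.one_lt_iff_nontrivial.2 ‹_›
  obtain ⟨c, hc, d, hd, hdc⟩ := exists_mem_strictDual_inner_eq_zero hE hK hL hK₀ hL₀ hKL
  obtain ⟨x, hx⟩ := hK₀
  obtain ⟨b, hb, hmem⟩ := exists_basis_coord_eq e k (φ := innerₛₗ ℝ d) (v := ⟪d, x⟫⁻¹ • x)
    (by simp [(hd x hx).ne'])
    (fun w (hw : w ∈ strictDual L ∩ LinearMap.ker (innerₛₗ ℝ d)) => hw.2)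
    (le_span_inter_of_isOpen (isOpen_strictDual hL) ⟨c, hc, hdc⟩)
  refine ⟨b, fun i => ?_, d, hd, fun v => by rw [hb, innerₛₗ_apply_apply]⟩
  rcases hmem i with hi | hi
  · rw [hi]
    exact smul_mem_strictDual (hKL hx) (inv_pos.2 (hd x hx))
  · exact hi.1

end StrictDual

section JointNumericalRange

variable {𝕜 ι p q : Type*} [RCLike 𝕜] [Fintype p] [Fintype q]

/-- The vector of values at `x` of the quadratic forms of a family of matrices. Taking real parts
loses nothing for Hermitian matrices. -/
noncomputable def quadraticValues (A : ι → Matrix p p 𝕜) (x : p → 𝕜) : EuclideanSpace ℝ ι :=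
  WithLp.toLp 2 fun i => RCLike.re (star x ⬝ᵥ A i *ᵥ x)

/-- The joint numerical range of a family of matrices, whose strict dual cone detects the positive
definite real combinations of the family. The unit sphere is that of the sup norm; by homogeneity
another norm changes the range only by positive factors. -/
def jointNumericalRange (A : ι → Matrix p p 𝕜) : Set (EuclideanSpace ℝ ι) :=
  quadraticValues A '' Metric.sphere 0 1

theorem quadraticValues_smul (A : ι → Matrix p p 𝕜) (r : ℝ) (x : p → 𝕜) :
    quadraticValues A (r • x) = r ^ 2 • quadraticValues A x := by
  ext i
  simp [quadraticValues, mulVec_smul, RCLike.smul_re, sq, mul_assoc]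

theorem continuous_quadraticValues (A : ι → Matrix p p 𝕜) : Continuous (quadraticValues A) := by
  unfold quadraticValues
  fun_prop

theorem isCompact_jointNumericalRange (A : ι → Matrix p p 𝕜) :
    IsCompact (jointNumericalRange A) :=
  (isCompact_sphere 0 1).image (continuous_quadraticValues A)

theorem jointNumericalRange_nonempty [Nonempty p] (A : ι → Matrix p p 𝕜) :
    (jointNumericalRange A).Nonempty :=
  (NormedSpace.sphere_nonempty.2 zero_le_one).image _

variable [Fintype ι]

theorem inner_quadraticValues (A : ι → Matrix p p 𝕜) (x : p → 𝕜) (c : EuclideanSpace ℝ ι) :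
    ⟪c, quadraticValues A x⟫ = RCLike.re (star x ⬝ᵥ (∑ i, c i • A i) *ᵥ x) := by
  simp [quadraticValues, PiLp.inner_apply, Matrix.sum_mulVec, dotProduct_sum, smul_mulVec,
    dotProduct_smul, RCLike.smul_re, mul_comm]

theorem posDef_sum_smul_of_mem_strictDual {A : ι → Matrix p p 𝕜} (hA : ∀ i, (A i).IsHermitian)
    {c : EuclideanSpace ℝ ι} (hc : c ∈ strictDual (jointNumericalRange A)) :
    (∑ i, c i • A i).PosDef := by
  have hM := isHermitian_sum_smul hA c
  refine .of_dotProduct_mulVec_pos hM fun x hx => ?_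
  have hnorm : 0 < ‖x‖ := norm_pos_iff.2 hx
  have hsphere : ‖x‖⁻¹ • x ∈ Metric.sphere (0 : p → 𝕜) 1 := by simp [norm_smul, hnorm.ne']
  have hpos : 0 < ⟪c, quadraticValues A x⟫ := by
    have hunit := hc _ (mem_image_of_mem _ hsphere)
    rw [quadraticValues_smul, real_inner_smul_right] at hunit
    exact pos_of_mul_pos_right hunit (by positivity)
  rw [inner_quadraticValues] at hpos
  exact RCLike.pos_iff.2 ⟨hpos, hM.im_star_dotProduct_mulVec_self x⟩

theorem trace_conjTranspose_mul_vecMulVec {R : Type*} [CommSemiring R] [StarRing R]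
    (A : Matrix p p R) (B : Matrix q q R) (x : p → R) (y : q → R) :
    trace ((vecMulVec x (star y))ᴴ * (A * vecMulVec x (star y) * B)) =
      (star x ⬝ᵥ A *ᵥ x) * (star y ⬝ᵥ B *ᵥ y) := by
  rw [conjTranspose_vecMulVec, star_star, mul_vecMulVec, vecMulVec_mul _ _ B,
    vecMulVec_mul_vecMulVec, trace_vecMulVec, dotProduct_smul, smul_eq_mul, dotProduct_comm y,
    ← dotProduct_mulVec]

theorem inner_quadraticValues_quadraticValues {A : ι → Matrix p p 𝕜} {B : ι → Matrix q q 𝕜}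
    (hA : ∀ i, (A i).IsHermitian) (x : p → 𝕜) (y : q → 𝕜) :
    ⟪quadraticValues A x, quadraticValues B y⟫ =
      RCLike.re (trace ((vecMulVec x (star y))ᴴ * ∑ i, A i * vecMulVec x (star y) * B i)) := by
  simp only [Matrix.mul_sum, trace_sum, trace_conjTranspose_mul_vecMulVec, map_sum, RCLike.mul_re,
    (hA _).im_star_dotProduct_mulVec_self, zero_mul, sub_zero]
  simp [quadraticValues, PiLp.inner_apply, mul_comm]

theorem jointNumericalRange_subset_strictDual {A : ι → Matrix p p 𝕜} {B : ι → Matrix q q 𝕜}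
    (hA : ∀ i, (A i).IsHermitian)
    (h : ∀ X : Matrix p q 𝕜, X ≠ 0 → X.rank ≤ 1 →
      0 < RCLike.re (trace (Xᴴ * ∑ i, A i * X * B i))) :
    jointNumericalRange A ⊆ strictDual (jointNumericalRange B) := by
  rintro _ ⟨x, hx, rfl⟩ _ ⟨y, hy, rfl⟩
  have hx₀ : x ≠ 0 := ne_zero_of_mem_unit_sphere ⟨x, hx⟩
  have hy₀ : y ≠ 0 := ne_zero_of_mem_unit_sphere ⟨y, hy⟩
  rw [inner_quadraticValues_quadraticValues hA]
  exact h _ (vecMulVec_ne_zero_of_ne_zero hx₀ (star_ne_zero.2 hy₀)) (rank_vecMulVec_le _ _)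

theorem sum_mul_mul_change_of_basis {V : Type*} [AddCommGroup V] [Module ℝ V]
    (e b : Basis ι ℝ V) (A : ι → Matrix p p 𝕜) (B : ι → Matrix q q 𝕜) (X : Matrix p q 𝕜) :
    ∑ i, (∑ j, b.toMatrix e i j • A j) * X * (∑ j, e.toMatrix b j i • B j) =
      ∑ i, A i * X * B i := by
  classical
  exact sum_map₂_sum_smul_eq (e.toMatrix_mul_toMatrix_flip b)
    (LinearMap.mk₂ ℝ (fun (C : Matrix p p 𝕜) (D : Matrix q q 𝕜) => C * X * D)
      (by simp [Matrix.add_mul]) (by simp) (by simp [Matrix.mul_add]) (by simp)) A B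

end JointNumericalRange

theorem positive_B_decomposition_general {𝕜 ι p q : Type*} [RCLike 𝕜] [Fintype ι] [Nontrivial ι]
    [Fintype p] [Fintype q] (k : ι)
    (A : ι → Matrix p p 𝕜) (B : ι → Matrix q q 𝕜)
    (hA : ∀ i, (A i).IsHermitian) (hB : ∀ i, (B i).IsHermitian)
    (h : ∀ X : Matrix p q 𝕜, X ≠ 0 → X.rank ≤ 1 →
      0 < RCLike.re (trace (Xᴴ * ∑ i, A i * X * B i))) :
    ∃ (A' : ι → Matrix p p 𝕜) (B' : ι → Matrix q q 𝕜),
      (∀ i, (B' i).PosDef) ∧ (A' k).PosDef ∧ (∀ i, (A' i).IsHermitian) ∧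
      ∀ X : Matrix p q 𝕜, ∑ i, A i * X * B i = ∑ i, A' i * X * B' i := by
  classical
  by_cases hpq : IsEmpty p ∨ IsEmpty q
  · have : Subsingleton (Matrix p q 𝕜) := by
      rcases hpq with hp | hq <;> infer_instance
    exact ⟨1, 1, fun _ => .one, .one, fun _ => isHermitian_one, fun _ => Subsingleton.elim _ _⟩
  simp only [not_or, not_isEmpty_iff] at hpq
  obtain ⟨hp, hq⟩ := hpq
  let e := (EuclideanSpace.basisFun ι ℝ).toBasis
  obtain ⟨b, hb, d, hd, hcoord⟩ := exists_basis_mem_strictDual e k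
    (isCompact_jointNumericalRange A) (isCompact_jointNumericalRange B)
    (jointNumericalRange_nonempty A) (jointNumericalRange_nonempty B)
    (jointNumericalRange_subset_strictDual hA h)
  have hrow : ∀ j, b.toMatrix e k j = d j := fun j => by
    simp [Basis.toMatrix_apply, ← Basis.coord_apply, hcoord, e, EuclideanSpace.inner_single_right]
  refine ⟨fun i => ∑ j, b.toMatrix e i j • A j, fun i => ∑ j, e.toMatrix b j i • B j,
    fun i => ?_, ?_, fun i => isHermitian_sum_smul hA _,
    fun X => (sum_mul_mul_change_of_basis e b A B X).symm⟩
  · exact posDef_sum_smul_of_mem_strictDual hB (hb i)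
  · simpa only [hrow] using posDef_sum_smul_of_mem_strictDual hA hd

/-- If `m ≥ 2`, `𝒜(X) = ∑ᵢ Aᵢ X Bᵢ` with all `Aᵢ, Bᵢ` Hermitian, and
`⟨𝒜(X), X⟩ > 0` for all nonzero `X` (Frobenius inner product), then there exist
positive matrices `Bᵢ'`, a positive matrix `A₁'`, and Hermitian matrices `Aᵢ'`
(for `i ≥ 2`) with `𝒜(X) = ∑ᵢ Aᵢ' X Bᵢ'` for all `X`. -/
theorem positive_B_decomposition {n m : ℕ} (hm : 2 ≤ m)
    (A B : Fin m → Matrix (Fin n) (Fin n) ℂ)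
    (hA : ∀ i, (A i).IsHermitian) (hB : ∀ i, (B i).IsHermitian)
    (h : ∀ X : Matrix (Fin n) (Fin n) ℂ, X ≠ 0 →
      (Matrix.trace (Xᴴ * ∑ i, A i * X * B i)).im = 0 ∧
      0 < (Matrix.trace (Xᴴ * ∑ i, A i * X * B i)).re) :
    ∃ A' B' : Fin m → Matrix (Fin n) (Fin n) ℂ,
      (∀ i, (B' i).PosDef) ∧
      (A' ⟨0, by omega⟩).PosDef ∧
      (∀ i, (A' i).IsHermitian) ∧
      (∀ X : Matrix (Fin n) (Fin n) ℂ, ∑ i, A i * X * B i = ∑ i, A' i * X * B' i) := by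
  have : Nontrivial (Fin m) := Fin.nontrivial_iff_two_le.2 hm
  exact positive_B_decomposition_general _ A B hA hB fun X hX _ => (h X hX).2
end

section
/- Let m ≥ 2 and let 𝒜 : M_n(ℂ) → M_n(ℂ) be given by 𝒜(X) = Σ_{i=1}^m A_i X B_i with all A_i, B_i ∈ M_n(ℂ) Hermitian. If ⟨𝒜(X), X⟩ > 0 for all nonzero X ∈ M_n(ℂ) (Frobenius inner product), then there exist positive matrices A_i', B_i' ∈ M_n(ℂ), i = 1, …, m, such that 𝒜(X) = −A_1' X B_1' + Σ_{i=2}^m A_i' X B_i' for all X ∈ M_n(ℂ). -/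
open Matrix ComplexOrder

/-!
Positivity on the rank-one matrices `x yᴴ` says `∑ᵢ ⟨Aᵢx, x⟩⟨Bᵢy, y⟩ > 0` for all `x, y ≠ 0`.
Writing `A(p) = ∑ᵢ pᵢ Aᵢ` for `p` in Euclidean space, this means that `B(a) > 0` for
`a = (⟨Aᵢx, x⟩)ᵢ` and `A(b) > 0` for `b = (⟨Bᵢy, y⟩)ᵢ`.

There are orthogonal `p`, `f` with `A(p) > 0` and `B(f) > 0`: take `e` independent of such an `a`
and move along `-a` until `g = e - c a ≠ 0` has `B(g) ≥ 0` singular, at `y` say. Then `g ⊥ b`, so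
`p = r b - g` has `⟨p, g⟩ = -‖g‖² < 0`, with `A(p) > 0` for large `r`. Since `⟨p, a⟩ > 0`, some
`f = g + ε a` with `ε > 0` is orthogonal to `p`, and `B(f) ≥ ε B(a) > 0`.

Rotating by an orthonormal basis through `p` and `f` does not change `∑ᵢ Aᵢ ⊗ Bᵢ` and makes one of
the `Aᵢ` and, at a different index, one of the `Bᵢ` positive. Adding large multiples of these two
matrices to the other `Aᵢ` and `Bᵢ`, and compensating in the other tensor factor, spoils the sign of
a single coefficient.
-/

open Filter Module
open scoped TensorProduct RealInnerProductSpace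

variable {𝕜 n k ι : Type*} [RCLike 𝕜]

section QuadraticForm

variable [Fintype n]

/-- The real part `re (xᴴ M x)` of the quadratic form of `M` at `x`, as a real-linear function of
the matrix `M`. For Hermitian `M` it is the value of the form itself. -/
def reQuadForm (x : n → 𝕜) : Matrix n n 𝕜 →ₗ[ℝ] ℝ where
  toFun M := RCLike.re (star x ⬝ᵥ M *ᵥ x)
  map_add' M N := by simp only [add_mulVec, dotProduct_add, map_add]
  map_smul' r M := by simp only [smul_mulVec, dotProduct_smul, RCLike.smul_re, RingHom.id_apply,
    smul_eq_mul]

lemma reQuadForm_apply (x : n → 𝕜) (M : Matrix n n 𝕜) :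
    reQuadForm x M = RCLike.re (star x ⬝ᵥ M *ᵥ x) := rfl

lemma reQuadForm_zero_left (M : Matrix n n 𝕜) : reQuadForm 0 M = 0 := by
  simp only [reQuadForm_apply, mulVec_zero, dotProduct_zero, map_zero]

lemma reQuadForm_smul_left (r : ℝ) (x : n → 𝕜) (M : Matrix n n 𝕜) :
    reQuadForm (r • x) M = r ^ 2 * reQuadForm x M := by
  simp only [reQuadForm_apply, star_smul, star_trivial, mulVec_smul, smul_dotProduct,
    dotProduct_smul, RCLike.smul_re]
  ring

lemma continuous_reQuadForm (M : Matrix n n 𝕜) : Continuous fun x => reQuadForm x M := by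
  simp only [reQuadForm_apply]
  fun_prop

lemma posDef_iff_reQuadForm_pos {M : Matrix n n 𝕜} :
    M.PosDef ↔ M.IsHermitian ∧ ∀ x ≠ 0, 0 < reQuadForm x M := by
  rw [posDef_iff_dotProduct_mulVec]
  refine and_congr_right fun hM => forall₂_congr fun x _ => ?_
  rw [RCLike.pos_iff, hM.im_star_dotProduct_mulVec_self x, reQuadForm_apply]
  simp only [and_true]

lemma posSemidef_iff_reQuadForm_nonneg {M : Matrix n n 𝕜} :
    M.PosSemidef ↔ M.IsHermitian ∧ ∀ x, 0 ≤ reQuadForm x M := by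
  rw [posSemidef_iff_dotProduct_mulVec]
  refine and_congr_right fun hM => forall_congr' fun x => ?_
  rw [RCLike.nonneg_iff, hM.im_star_dotProduct_mulVec_self x, reQuadForm_apply]
  simp only [and_true]

lemma re_trace_conjTranspose_mul_vecMulVec [Fintype k] {A : Matrix n n 𝕜} (hA : A.IsHermitian)
    (B : Matrix k k 𝕜) (x : n → 𝕜) (y : k → 𝕜) :
    RCLike.re (trace ((vecMulVec x (star y))ᴴ * (A * vecMulVec x (star y) * B))) =
      reQuadForm x A * reQuadForm y B := by
  have trace_eq : trace ((vecMulVec x (star y))ᴴ * (A * vecMulVec x (star y) * B)) =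
      (star x ⬝ᵥ A *ᵥ x) * (star y ⬝ᵥ B *ᵥ y) := by
    rw [conjTranspose_vecMulVec, star_star, mul_vecMulVec, vecMulVec_mul (A *ᵥ x),
      vecMulVec_mul_vecMulVec, trace_vecMulVec, dotProduct_mulVec (star y), dotProduct_smul,
      smul_eq_mul, dotProduct_comm y]
  rw [trace_eq, RCLike.mul_re, hA.im_star_dotProduct_mulVec_self x, zero_mul, sub_zero,
    reQuadForm_apply, reQuadForm_apply]

/-- The constant is the minimum of the generalized Rayleigh quotient of `N` and `M`. -/
lemma exists_posSemidef_sub_smul_reQuadForm_eq_zero [Nonempty n] {M N : Matrix n n 𝕜}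
    (hN : N.IsHermitian) (hM : M.PosDef) :
    ∃ c : ℝ, (N - c • M).PosSemidef ∧ ∃ y ≠ 0, reQuadForm y (N - c • M) = 0 := by
  have hMpos := (posDef_iff_reQuadForm_pos.mp hM).2
  have sphere_ne_zero : ∀ x ∈ Metric.sphere (0 : n → 𝕜) 1, x ≠ 0 :=
    fun x hx => ne_zero_of_mem_unit_sphere ⟨x, hx⟩
  obtain ⟨y, hy, hmin⟩ := (isCompact_sphere (0 : n → 𝕜) 1).exists_isMinOn
    ⟨1, by simp only [mem_sphere_zero_iff_norm, norm_one]⟩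
    ((continuous_reQuadForm N).continuousOn.div (continuous_reQuadForm M).continuousOn
      fun x hx => (hMpos x (sphere_ne_zero x hx)).ne')
  set c := reQuadForm y N / reQuadForm y M
  have nonneg_on_sphere : ∀ x ∈ Metric.sphere (0 : n → 𝕜) 1, 0 ≤ reQuadForm x (N - c • M) := by
    intro x hx
    rw [map_sub, map_smul, smul_eq_mul, sub_nonneg,
      ← le_div_iff₀ (hMpos x (sphere_ne_zero x hx))]
    exact hmin hx
  refine ⟨c, posSemidef_iff_reQuadForm_nonneg.mpr
    ⟨hN.sub (hM.isHermitian.smul (.all c)), fun x => ?_⟩, y, sphere_ne_zero y hy, ?_⟩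
  · obtain rfl | hx := eq_or_ne x 0
    · rw [reQuadForm_zero_left]
    · have hx' : x = ‖x‖ • ‖x‖⁻¹ • x := (smul_inv_smul₀ (norm_ne_zero_iff.mpr hx) x).symm
      rw [hx', reQuadForm_smul_left]
      exact mul_nonneg (sq_nonneg _) (nonneg_on_sphere _ <| by
        rw [mem_sphere_zero_iff_norm, norm_smul, norm_inv, norm_norm,
          inv_mul_cancel₀ (norm_ne_zero_iff.mpr hx)])
  · rw [map_sub, map_smul, smul_eq_mul, div_mul_cancel₀ _ (hMpos y (sphere_ne_zero y hy)).ne',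
      sub_self]

end QuadraticForm

lemma eventually_posDef_add_smul [Finite n] {H P : Matrix n n 𝕜} (hH : H.IsHermitian)
    (hP : P.PosDef) : ∀ᶠ r : ℝ in atTop, (H + r • P).PosDef := by
  cases nonempty_fintype n
  cases isEmpty_or_nonempty n
  · exact .of_forall fun r => Subsingleton.elim P (H + r • P) ▸ hP
  obtain ⟨c, hc, -⟩ := exists_posSemidef_sub_smul_reQuadForm_eq_zero hH hP
  filter_upwards [eventually_gt_atTop (-c)] with r hr
  have split : H + r • P = (H - c • P) + (c + r) • P := by module
  exact split ▸ PosDef.posSemidef_add hc (hP.smul (by linarith))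

lemma ne_zero_of_posDef {R : Type*} [Ring R] [PartialOrder R] [StarRing R] [Nontrivial R]
    [Nonempty n] {M : Matrix n n R} (hM : M.PosDef) : M ≠ 0 := by
  rintro rfl
  exact (hM.diag_pos (i := Classical.arbitrary n)).ne rfl

lemma isHermitian_sum {R : Type*} [AddCommMonoid R] [StarAddMonoid R] {s : Finset ι}
    {A : ι → Matrix n n R} (hA : ∀ i ∈ s, (A i).IsHermitian) : (∑ i ∈ s, A i).IsHermitian :=
  isSelfAdjoint_sum s hA

section EuclideanCombination

variable [Fintype ι]

/-- The linear map `p ↦ ∑ i, p i • A i`, on coefficient vectors in Euclidean space so that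
orthogonality of coefficients makes sense. -/
noncomputable def euclideanCombination {M : Type*} [AddCommGroup M] [Module ℝ M] (A : ι → M) :
    EuclideanSpace ℝ ι →ₗ[ℝ] M :=
  Fintype.linearCombination ℝ A ∘ₗ (WithLp.linearEquiv 2 ℝ (ι → ℝ)).toLinearMap

lemma euclideanCombination_apply {M : Type*} [AddCommGroup M] [Module ℝ M] (A : ι → M)
    (p : EuclideanSpace ℝ ι) : euclideanCombination A p = ∑ i, p i • A i := rfl

lemma euclideanCombination_single {M : Type*} [AddCommGroup M] [Module ℝ M] [DecidableEq ι]
    (A : ι → M) (i : ι) : euclideanCombination A (EuclideanSpace.single i 1) = A i := by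
  simp only [euclideanCombination_apply, PiLp.single_apply, ite_smul, one_smul, zero_smul,
    Finset.sum_ite_eq', Finset.mem_univ, if_true]

lemma isHermitian_euclideanCombination {A : ι → Matrix n n 𝕜} (hA : ∀ i, (A i).IsHermitian)
    (p : EuclideanSpace ℝ ι) : (euclideanCombination A p).IsHermitian :=
  isHermitian_sum fun i _ => (hA i).smul (.all (p i))

variable [Fintype n]

/-- The vector of the values at `x` of the quadratic forms of the matrices `A i`. -/
noncomputable def formVector (A : ι → Matrix n n 𝕜) (x : n → 𝕜) : EuclideanSpace ℝ ι :=
  WithLp.toLp 2 fun i => reQuadForm x (A i)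

lemma re_trace_conjTranspose_mul_sum_vecMulVec [Fintype k] {A : ι → Matrix n n 𝕜}
    (hA : ∀ i, (A i).IsHermitian) (B : ι → Matrix k k 𝕜) (x : n → 𝕜) (y : k → 𝕜) :
    RCLike.re (trace ((vecMulVec x (star y))ᴴ * ∑ i, A i * vecMulVec x (star y) * B i)) =
      ⟪formVector A x, formVector B y⟫ := by
  simp only [Matrix.mul_sum, trace_sum, map_sum, re_trace_conjTranspose_mul_vecMulVec (hA _),
    PiLp.inner_apply, formVector, RCLike.inner_apply, conj_trivial, mul_comm]

lemma reQuadForm_euclideanCombination (A : ι → Matrix n n 𝕜) (p : EuclideanSpace ℝ ι)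
    (x : n → 𝕜) : reQuadForm x (euclideanCombination A p) = ⟪p, formVector A x⟫ := by
  simp only [euclideanCombination_apply, map_sum, map_smul, smul_eq_mul, PiLp.inner_apply,
    formVector, RCLike.inner_apply, conj_trivial, mul_comm]

lemma posDef_euclideanCombination_iff {A : ι → Matrix n n 𝕜} (hA : ∀ i, (A i).IsHermitian)
    (p : EuclideanSpace ℝ ι) :
    (euclideanCombination A p).PosDef ↔ ∀ x ≠ 0, 0 < ⟪p, formVector A x⟫ := by
  simp only [posDef_iff_reQuadForm_pos, isHermitian_euclideanCombination hA p, true_and,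
    reQuadForm_euclideanCombination]

lemma exists_posSemidef_euclideanCombination_inner_formVector_eq_zero [Nontrivial ι] [Nonempty n]
    {B : ι → Matrix n n 𝕜} (hB : ∀ i, (B i).IsHermitian) {a : EuclideanSpace ℝ ι}
    (ha : (euclideanCombination B a).PosDef) :
    ∃ g ≠ 0, (euclideanCombination B g).PosSemidef ∧ ∃ y ≠ 0, ⟪g, formVector B y⟫ = 0 := by
  have ha₀ : a ≠ 0 := ne_zero_of_map (ne_zero_of_posDef ha)
  obtain ⟨e, he⟩ := exists_linearIndependent_pair_of_one_lt_finrank (R := ℝ)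
    (by simpa only [finrank_euclideanSpace] using Fintype.one_lt_card) ha₀
  obtain ⟨c, hc, y, hy, hyc⟩ := exists_posSemidef_sub_smul_reQuadForm_eq_zero
    (isHermitian_euclideanCombination hB e) ha
  rw [← map_smul, ← map_sub] at hc hyc
  refine ⟨e - c • a, fun h => ?_, hc, y, hy, ?_⟩
  · refine one_ne_zero (LinearIndependent.pair_iff.mp he (-c) 1 ?_).2
    rw [← h]
    module
  · rwa [reQuadForm_euclideanCombination] at hyc

lemma exists_posDef_euclideanCombination_inner_eq_zero [Fintype k] [Nontrivial ι] [Nonempty n]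
    [Nonempty k] {A : ι → Matrix n n 𝕜} {B : ι → Matrix k k 𝕜} (hA : ∀ i, (A i).IsHermitian)
    (hB : ∀ i, (B i).IsHermitian)
    (hpos : ∀ x ≠ 0, ∀ y ≠ 0, 0 < ⟪formVector A x, formVector B y⟫) :
    ∃ p f : EuclideanSpace ℝ ι,
      (euclideanCombination A p).PosDef ∧ (euclideanCombination B f).PosDef ∧ ⟪p, f⟫ = 0 := by
  obtain ⟨x, hx⟩ := exists_ne (0 : n → 𝕜)
  set a := formVector A x
  have ha : (euclideanCombination B a).PosDef :=
    (posDef_euclideanCombination_iff hB a).mpr (hpos x hx)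
  obtain ⟨g, hg, hBg, y, hy, hgy⟩ :=
    exists_posSemidef_euclideanCombination_inner_formVector_eq_zero hB ha
  set b := formVector B y
  have hb : (euclideanCombination A b).PosDef :=
    (posDef_euclideanCombination_iff hA b).mpr fun z hz => real_inner_comm b _ ▸ hpos z hz y hy
  obtain ⟨r, hr⟩ := (eventually_posDef_add_smul (isHermitian_euclideanCombination hA g).neg
    hb).exists
  rw [← map_neg, ← map_smul, ← map_add] at hr
  set p := -g + r • b
  have hpa : 0 < ⟪p, a⟫ := (posDef_euclideanCombination_iff hA p).mp hr x hx
  have hpg : ⟪p, g⟫ = -‖g‖ ^ 2 := by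
    rw [inner_add_left, inner_neg_left, real_inner_self_eq_norm_sq, real_inner_smul_left,
      real_inner_comm, hgy, mul_zero, add_zero]
  set ε := ‖g‖ ^ 2 / ⟪p, a⟫
  have hε : 0 < ε := div_pos (pow_pos (norm_pos_iff.mpr hg) 2) hpa
  refine ⟨p, g + ε • a, hr, ?_, ?_⟩
  · rw [map_add, map_smul]
    exact PosDef.posSemidef_add hBg (ha.smul hε)
  · rw [inner_add_right, real_inner_smul_right, hpg, div_mul_cancel₀ _ hpa.ne', neg_add_cancel]

end EuclideanCombination

lemma exists_orthonormalBasis_normalize_of_inner_eq_zero {E : Type*} [NormedAddCommGroup E]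
    [InnerProductSpace 𝕜 E] [FiniteDimensional 𝕜 E] [Fintype ι]
    (hcard : finrank 𝕜 E = Fintype.card ι) {i j : ι} (hij : i ≠ j) {u v : E} (hu : u ≠ 0)
    (hv : v ≠ 0) (huv : inner 𝕜 u v = 0) :
    ∃ b : OrthonormalBasis ι 𝕜 E,
      b i = (‖u‖⁻¹ : 𝕜) • u ∧ b j = (‖v‖⁻¹ : 𝕜) • v := by
  classical
  let w : ι → E := fun l => if l = i then (‖u‖⁻¹ : 𝕜) • u else (‖v‖⁻¹ : 𝕜) • v
  have hwi : w i = (‖u‖⁻¹ : 𝕜) • u := if_pos rfl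
  have hwj : w j = (‖v‖⁻¹ : 𝕜) • v := if_neg hij.symm
  have horth : inner 𝕜 (w i) (w j) = 0 := by
    rw [hwi, hwj, inner_smul_left, inner_smul_right, huv, mul_zero, mul_zero]
  have hw : Orthonormal 𝕜 (({i, j} : Set ι).domRestrict w) := by
    constructor
    · rintro ⟨l, rfl | rfl⟩
      · exact (congrArg norm hwi).trans (norm_smul_inv_norm hu)
      · exact (congrArg norm hwj).trans (norm_smul_inv_norm hv)
    · rintro ⟨l, rfl | rfl⟩ ⟨l', rfl | rfl⟩ hne
      · exact absurd rfl hne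
      · exact horth
      · exact inner_eq_zero_symm.mp horth
      · exact absurd rfl hne
  obtain ⟨b, hb⟩ := hw.exists_orthonormalBasis_extension_of_card_eq hcard
  exact ⟨b, (hb i (by simp)).trans hwi, (hb j (by simp)).trans hwj⟩

lemma sum_orthonormalBasis_tmul_eq {κ E M N : Type*} [Fintype ι] [Fintype κ]
    [NormedAddCommGroup E] [InnerProductSpace ℝ E] [AddCommGroup M] [Module ℝ M] [AddCommGroup N]
    [Module ℝ N] (b : OrthonormalBasis ι ℝ E) (c : OrthonormalBasis κ ℝ E) (S : E →ₗ[ℝ] M)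
    (T : E →ₗ[ℝ] N) :
    ∑ i, S (b i) ⊗ₜ[ℝ] T (b i) = ∑ j, S (c j) ⊗ₜ[ℝ] T (c j) :=
  calc ∑ i, S (b i) ⊗ₜ[ℝ] T (b i)
      = ∑ i, S (∑ j, ⟪c j, b i⟫ • c j) ⊗ₜ[ℝ] T (b i) := by simp only [c.sum_repr']
    _ = ∑ i, ∑ j, S (c j) ⊗ₜ[ℝ] T (⟪c j, b i⟫ • b i) := by
        simp only [map_sum, map_smul, TensorProduct.sum_tmul, TensorProduct.smul_tmul]
    _ = ∑ j, S (c j) ⊗ₜ[ℝ] T (∑ i, ⟪b i, c j⟫ • b i) := by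
        rw [Finset.sum_comm]
        simp only [map_sum, TensorProduct.tmul_sum, real_inner_comm]
    _ = ∑ j, S (c j) ⊗ₜ[ℝ] T (c j) := by simp only [b.sum_repr']

section Shear

variable {R M N : Type*} [CommRing R] [AddCommGroup M] [Module R M] [AddCommGroup N] [Module R N]
  [DecidableEq ι]

/-- The family obtained from `A` by adding `r • A i₀` to every member other than `A i₀`. -/
def shear (i₀ : ι) (r : R) (A : ι → M) : ι → M :=
  Function.update (fun i => A i + r • A i₀) i₀ (A i₀)

lemma shear_self (i₀ : ι) (r : R) (A : ι → M) : shear i₀ r A i₀ = A i₀ :=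
  Function.update_self ..

lemma shear_of_ne {i i₀ : ι} (h : i ≠ i₀) (r : R) (A : ι → M) :
    shear i₀ r A i = A i + r • A i₀ :=
  Function.update_of_ne h ..

variable [Fintype ι]

/-- The contragredient of `shear`: the change of `B` that compensates, in `∑ i, A i ⊗ₜ B i`, for
replacing `A` by `shear i₀ r A`. -/
def dualShear (i₀ : ι) (r : R) (B : ι → N) : ι → N :=
  Function.update B i₀ (B i₀ - r • ∑ i ∈ Finset.univ.erase i₀, B i)

lemma dualShear_self (i₀ : ι) (r : R) (B : ι → N) :
    dualShear i₀ r B i₀ = B i₀ - r • ∑ i ∈ Finset.univ.erase i₀, B i :=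
  Function.update_self ..

lemma dualShear_of_ne {i i₀ : ι} (h : i ≠ i₀) (r : R) (B : ι → N) : dualShear i₀ r B i = B i :=
  Function.update_of_ne h ..

lemma sum_shear_tmul_dualShear (i₀ : ι) (r : R) (A : ι → M) (B : ι → N) :
    ∑ i, shear i₀ r A i ⊗ₜ[R] dualShear i₀ r B i = ∑ i, A i ⊗ₜ[R] B i := by
  have off_diagonal : ∀ i ∈ Finset.univ.erase i₀,
      shear i₀ r A i ⊗ₜ[R] dualShear i₀ r B i = A i ⊗ₜ[R] B i + A i₀ ⊗ₜ[R] (r • B i) := by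
    intro i hi
    rw [shear_of_ne (Finset.ne_of_mem_erase hi), dualShear_of_ne (Finset.ne_of_mem_erase hi),
      TensorProduct.add_tmul, TensorProduct.smul_tmul]
  rw [← Finset.add_sum_erase _ _ (Finset.mem_univ i₀), Finset.sum_congr rfl off_diagonal,
    Finset.sum_add_distrib, shear_self, dualShear_self, TensorProduct.tmul_sub, Finset.smul_sum,
    TensorProduct.tmul_sum, ← Finset.add_sum_erase _ _ (Finset.mem_univ i₀)]
  abel

lemma sum_dualShear_tmul_shear (i₀ : ι) (r : R) (A : ι → M) (B : ι → N) :
    ∑ i, dualShear i₀ r A i ⊗ₜ[R] shear i₀ r B i = ∑ i, A i ⊗ₜ[R] B i := by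
  simpa only [map_sum, TensorProduct.comm_tmul] using
    congrArg (TensorProduct.comm R N M) (sum_shear_tmul_dualShear i₀ r B A)

end Shear

section PositiveFamilies

variable [DecidableEq ι] {i₀ i₁ : ι}

lemma eventually_posDef_shear [Finite n] [Finite ι] {A : ι → Matrix n n 𝕜}
    (hA : ∀ i, (A i).IsHermitian) (hA₀ : (A i₀).PosDef) :
    ∀ᶠ r : ℝ in atTop, ∀ i, (shear i₀ r A i).PosDef := by
  refine eventually_all.mpr fun i => ?_
  obtain rfl | hi := eq_or_ne i i₀
  · exact .of_forall fun r => (shear_self i r A).symm ▸ hA₀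
  · simpa only [shear_of_ne hi] using eventually_posDef_add_smul (hA i) hA₀

variable [Fintype ι]

lemma isHermitian_dualShear (i₀ : ι) (r : ℝ) {A : ι → Matrix n n 𝕜}
    (hA : ∀ i, (A i).IsHermitian) (i : ι) : (dualShear i₀ r A i).IsHermitian := by
  obtain rfl | hi := eq_or_ne i i₀
  · exact (dualShear_self i r A).symm ▸ (hA i).sub ((isHermitian_sum fun j _ => hA j).smul (.all r))
  · exact (dualShear_of_ne hi r A).symm ▸ hA i

lemma eventually_posDef_neg_dualShear [Finite n] [Nontrivial ι] {B : ι → Matrix n n 𝕜}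
    (hB₀ : (B i₀).IsHermitian) (hB : ∀ i ≠ i₀, (B i).PosDef) :
    ∀ᶠ r : ℝ in atTop, (-dualShear i₀ r B i₀).PosDef := by
  have hsum : (∑ i ∈ Finset.univ.erase i₀, B i).PosDef :=
    posDef_sum (Finset.univ_nontrivial.erase_nonempty)
      fun i hi => hB i (Finset.ne_of_mem_erase hi)
  have neg_eq (r : ℝ) :
      -dualShear i₀ r B i₀ = -B i₀ + r • ∑ i ∈ Finset.univ.erase i₀, B i := by
    rw [dualShear_self, neg_sub, sub_eq_neg_add]
  simpa only [neg_eq] using eventually_posDef_add_smul hB₀.neg hsum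

variable [Finite n] [Finite k]

lemma exists_posDef_neg_tmul_add_sum_of_forall_ne [Nontrivial ι] {A : ι → Matrix n n 𝕜}
    {B : ι → Matrix k k 𝕜} (hA : ∀ i, (A i).IsHermitian) (hA₀ : (A i₀).PosDef)
    (hB₀ : (B i₀).IsHermitian) (hB : ∀ i ≠ i₀, (B i).PosDef) :
    ∃ (A' : ι → Matrix n n 𝕜) (B' : ι → Matrix k k 𝕜),
      (∀ i, (A' i).PosDef) ∧ (∀ i, (B' i).PosDef) ∧
      ∑ i, A i ⊗ₜ[ℝ] B i =
        -(A' i₀ ⊗ₜ[ℝ] B' i₀) + ∑ i ∈ Finset.univ.erase i₀, A' i ⊗ₜ[ℝ] B' i := by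
  obtain ⟨r, hr, hr₀⟩ :=
    ((eventually_posDef_shear hA hA₀).and (eventually_posDef_neg_dualShear hB₀ hB)).exists
  refine ⟨shear i₀ r A, Function.update B i₀ (-dualShear i₀ r B i₀), hr, fun i => ?_, ?_⟩
  · obtain rfl | hi := eq_or_ne i i₀
    · rwa [Function.update_self]
    · rw [Function.update_of_ne hi]
      exact hB i hi
  · rw [← sum_shear_tmul_dualShear i₀ r, ← Finset.add_sum_erase _ _ (Finset.mem_univ i₀),
      Function.update_self, TensorProduct.tmul_neg, neg_neg]
    refine congrArg _ (Finset.sum_congr rfl fun i hi => ?_)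
    rw [dualShear_of_ne (Finset.ne_of_mem_erase hi),
      Function.update_of_ne (Finset.ne_of_mem_erase hi)]

lemma exists_posDef_neg_tmul_add_sum {A : ι → Matrix n n 𝕜} {B : ι → Matrix k k 𝕜}
    (hA : ∀ i, (A i).IsHermitian) (hB : ∀ i, (B i).IsHermitian) (hne : i₀ ≠ i₁)
    (hA₀ : (A i₀).PosDef) (hB₁ : (B i₁).PosDef) :
    ∃ (A' : ι → Matrix n n 𝕜) (B' : ι → Matrix k k 𝕜),
      (∀ i, (A' i).PosDef) ∧ (∀ i, (B' i).PosDef) ∧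
      ∑ i, A i ⊗ₜ[ℝ] B i =
        -(A' i₀ ⊗ₜ[ℝ] B' i₀) + ∑ i ∈ Finset.univ.erase i₀, A' i ⊗ₜ[ℝ] B' i := by
  have : Nontrivial ι := nontrivial_of_ne i₀ i₁ hne
  obtain ⟨s, hs⟩ := (eventually_posDef_shear hB hB₁).exists
  rw [← sum_dualShear_tmul_shear i₁ s]
  exact exists_posDef_neg_tmul_add_sum_of_forall_ne (isHermitian_dualShear i₁ s hA)
    ((dualShear_of_ne hne s A).symm ▸ hA₀) (hs i₀).isHermitian fun i _ => hs i

end PositiveFamilies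

lemma exists_posDef_neg_tmul_add_sum_of_inner_formVector_pos [Fintype n] [Fintype k] [Fintype ι]
    [DecidableEq ι] [Nontrivial ι] [Nonempty n] [Nonempty k] {A : ι → Matrix n n 𝕜}
    {B : ι → Matrix k k 𝕜} (hA : ∀ i, (A i).IsHermitian) (hB : ∀ i, (B i).IsHermitian)
    (hpos : ∀ x ≠ 0, ∀ y ≠ 0, 0 < ⟪formVector A x, formVector B y⟫) (i₀ : ι) :
    ∃ (A' : ι → Matrix n n 𝕜) (B' : ι → Matrix k k 𝕜),
      (∀ i, (A' i).PosDef) ∧ (∀ i, (B' i).PosDef) ∧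
      ∑ i, A i ⊗ₜ[ℝ] B i =
        -(A' i₀ ⊗ₜ[ℝ] B' i₀) + ∑ i ∈ Finset.univ.erase i₀, A' i ⊗ₜ[ℝ] B' i := by
  obtain ⟨p, f, hp, hf, hpf⟩ := exists_posDef_euclideanCombination_inner_eq_zero hA hB hpos
  have hp₀ : p ≠ 0 := ne_zero_of_map (ne_zero_of_posDef hp)
  have hf₀ : f ≠ 0 := ne_zero_of_map (ne_zero_of_posDef hf)
  obtain ⟨i₁, hi₁⟩ := exists_ne i₀
  obtain ⟨b, hb₀, hb₁⟩ := exists_orthonormalBasis_normalize_of_inner_eq_zero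
    finrank_euclideanSpace hi₁.symm hp₀ hf₀ hpf
  have rotated : ∑ i, A i ⊗ₜ[ℝ] B i =
      ∑ j, euclideanCombination A (b j) ⊗ₜ[ℝ] euclideanCombination B (b j) := by
    simpa only [EuclideanSpace.basisFun_apply, euclideanCombination_single] using
      sum_orthonormalBasis_tmul_eq (EuclideanSpace.basisFun ι ℝ) b (euclideanCombination A)
        (euclideanCombination B)
  rw [rotated]
  refine exists_posDef_neg_tmul_add_sum (fun j => isHermitian_euclideanCombination hA (b j))
    (fun j => isHermitian_euclideanCombination hB (b j)) hi₁.symm ?_ ?_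
  · rw [hb₀, map_smul]
    exact hp.smul (inv_pos.mpr (norm_pos_iff.mpr hp₀))
  · rw [hb₁, map_smul]
    exact hf.smul (inv_pos.mpr (norm_pos_iff.mpr hf₀))

/-- The map `P ⊗ Q ↦ P * X * Q`: it turns identities between tensors `∑ i, A i ⊗ₜ B i` into
identities between the operators `X ↦ ∑ i, A i * X * B i`. -/
def sandwich (R : Type*) {S l m : Type*} [CommSemiring R] [Semiring S] [Algebra R S] [Fintype n]
    [Fintype k] (X : Matrix n k S) : Matrix l n S ⊗[R] Matrix k m S →ₗ[R] Matrix l m S :=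
  TensorProduct.lift <| LinearMap.mk₂ R (fun P Q => P * X * Q)
    (fun P P' Q => by rw [Matrix.add_mul, Matrix.add_mul])
    (fun r P Q => by rw [smul_mul, smul_mul])
    (fun P Q Q' => Matrix.mul_add _ _ _)
    (fun r P Q => Matrix.mul_smul _ _ _)

lemma sandwich_tmul (R : Type*) {S l m : Type*} [CommSemiring R] [Semiring S] [Algebra R S]
    [Fintype n] [Fintype k] (X : Matrix n k S) (P : Matrix l n S) (Q : Matrix k m S) :
    sandwich R X (P ⊗ₜ[R] Q) = P * X * Q := rfl

theorem positive_up_to_sign_decomposition_general [Fintype n] [Fintype k] [Fintype ι]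
    [DecidableEq ι] [Nontrivial ι] {A : ι → Matrix n n 𝕜} {B : ι → Matrix k k 𝕜}
    (hA : ∀ i, (A i).IsHermitian) (hB : ∀ i, (B i).IsHermitian)
    (hpos : ∀ x : n → 𝕜, x ≠ 0 → ∀ y : k → 𝕜, y ≠ 0 → 0 < RCLike.re
      (trace ((vecMulVec x (star y))ᴴ * ∑ i, A i * vecMulVec x (star y) * B i))) (i₀ : ι) :
    ∃ (A' : ι → Matrix n n 𝕜) (B' : ι → Matrix k k 𝕜),
      (∀ i, (A' i).PosDef) ∧ (∀ i, (B' i).PosDef) ∧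
      ∀ X : Matrix n k 𝕜, ∑ i, A i * X * B i =
        -(A' i₀ * X * B' i₀) + ∑ i ∈ Finset.univ.erase i₀, A' i * X * B' i := by
  by_cases hempty : IsEmpty n ∨ IsEmpty k
  · classical
    have : Subsingleton (Matrix n k 𝕜) :=
      hempty.elim (fun _ => inferInstance) fun _ => inferInstance
    exact ⟨fun _ => 1, fun _ => 1, fun _ => .one, fun _ => .one, fun _ => Subsingleton.elim _ _⟩
  obtain ⟨_, _⟩ : Nonempty n ∧ Nonempty k := by
    simpa only [not_or, not_isEmpty_iff] using hempty
  simp only [re_trace_conjTranspose_mul_sum_vecMulVec hA] at hpos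
  obtain ⟨A', B', hA', hB', tensor_eq⟩ :=
    exists_posDef_neg_tmul_add_sum_of_inner_formVector_pos hA hB hpos i₀
  refine ⟨A', B', hA', hB', fun X => ?_⟩
  simpa only [map_add, map_neg, map_sum, sandwich_tmul] using congrArg (sandwich ℝ X) tensor_eq

/-- If `m ≥ 2`, `𝒜(X) = ∑ᵢ Aᵢ X Bᵢ` with all `Aᵢ, Bᵢ` Hermitian, and
`⟨𝒜(X), X⟩ > 0` for all nonzero `X` (Frobenius inner product), then there exist
positive matrices `Aᵢ', Bᵢ'` with
`𝒜(X) = −A₁' X B₁' + ∑_{i=2}^m Aᵢ' X Bᵢ'` for all `X`. -/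
theorem positive_up_to_sign_decomposition {n m : ℕ} (hm : 2 ≤ m)
    (A B : Fin m → Matrix (Fin n) (Fin n) ℂ)
    (hA : ∀ i, (A i).IsHermitian) (hB : ∀ i, (B i).IsHermitian)
    (h : ∀ X : Matrix (Fin n) (Fin n) ℂ, X ≠ 0 →
      (Matrix.trace (Xᴴ * ∑ i, A i * X * B i)).im = 0 ∧
      0 < (Matrix.trace (Xᴴ * ∑ i, A i * X * B i)).re) :
    ∃ A' B' : Fin m → Matrix (Fin n) (Fin n) ℂ,
      (∀ i, (A' i).PosDef) ∧ (∀ i, (B' i).PosDef) ∧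
      (∀ X : Matrix (Fin n) (Fin n) ℂ,
        ∑ i, A i * X * B i =
          -(A' ⟨0, by omega⟩ * X * B' ⟨0, by omega⟩)
            + ∑ i ∈ Finset.univ.erase ⟨0, by omega⟩, A' i * X * B' i) := by
  have : Nontrivial (Fin m) := Fin.nontrivial_iff_two_le.mpr hm
  exact positive_up_to_sign_decomposition_general hA hB
    (fun x hx y hy => (h _ (vecMulVec_ne_zero hx (star_ne_zero.mpr hy))).2) _
end
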